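/- Let x ∈ ℝ^n have i.i.d. Bernoulli–Gaussian(θ) entries and let p, q be unit vectors in ℝ^n. Then P(sign(⟨p,x⟩) ≠ sign(⟨q,x⟩)) = (1/π)·E_Ω[angle(p_Ω, q_Ω)], where Ω is the random support of x, provided events where exactly one of ⟨p,x⟩, ⟨q,x⟩ vanishes have probability zero conditional on each Ω (which holds since the conditional laws are Gaussian). -/

import Mathlib

open MeasureTheory ProbabilityTheory Finset

/-- The Bernoulli–Gaussian distribution BG(θ) on ℝ. -/
noncomputable def bg (θ : ℝ) : Measure ℝ :=
  (Real.toNNReal (1 - θ)) • Measure.dirac 0 + (Real.toNNReal θ) • gaussianReal 0 1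

instance (θ : ℝ) : IsFiniteMeasure (bg θ) := by unfold bg; infer_instance

/-- Angle between two vectors in ℝ^k, with the convention that the angle
    involving a zero vector is 0. -/
noncomputable def ang {k : ℕ} (x y : Fin k → ℝ) : ℝ :=
  if x = 0 ∨ y = 0 then 0
  else Real.arccos ((∑ i, x i * y i) /
    (Real.sqrt (∑ i, x i ^ 2) * Real.sqrt (∑ i, y i ^ 2)))

/-- The restriction of a vector to a subset of coordinates (zero elsewhere). -/
def restrict {k : ℕ} (x : Fin k → ℝ) (Ω : Finset (Fin k)) : Fin k → ℝ :=
  fun i => if i ∈ Ω then x i else 0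


/-- Planar standard Gaussian. -/
noncomputable def gauss2 : Measure (ℝ × ℝ) := (gaussianReal 0 1).prod (gaussianReal 0 1)

instance : IsProbabilityMeasure gauss2 := by unfold gauss2; infer_instance

/-- radial constant -/
noncomputable def radK : ENNReal :=
  ∫⁻ r in Set.Ioi (0:ℝ), ENNReal.ofReal r * ENNReal.ofReal ((2 * Real.pi)⁻¹ * Real.exp (- r ^ 2 / 2))

lemma dens_polar (r t : ℝ) :
    gaussianPDF 0 1 (r * Real.cos t) * gaussianPDF 0 1 (r * Real.sin t) =
      ENNReal.ofReal ((2 * Real.pi)⁻¹ * Real.exp (- r ^ 2 / 2)) := by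
  rw [gaussianPDF, gaussianPDF, ← ENNReal.ofReal_mul (gaussianPDFReal_nonneg _ _ _)]
  congr 1
  simp only [gaussianPDFReal, NNReal.coe_one, mul_one, sub_zero]
  rw [mul_mul_mul_comm, ← Real.exp_add, ← mul_inv, Real.mul_self_sqrt (by positivity)]
  congr 2
  have := Real.sin_sq_add_cos_sq t
  linear_combination (-r^2/2) * this

lemma gauss2_sector (T : Set (ℝ × ℝ)) (hT : MeasurableSet T) (S : Set ℝ) (hS : MeasurableSet S)
    (hS' : S ⊆ Set.Ioo (-Real.pi) Real.pi)
    (h : ∀ r t : ℝ, 0 < r → t ∈ Set.Ioo (-Real.pi) Real.pi →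
      ((r * Real.cos t, r * Real.sin t) ∈ T ↔ t ∈ S)) :
    gauss2 T = radK * volume S := by
  have hm : Measurable (gaussianPDF 0 1) := measurable_gaussianPDF 0 1
  have e : gauss2 = (volume : Measure (ℝ × ℝ)).withDensity
      (fun z => gaussianPDF 0 1 z.1 * gaussianPDF 0 1 z.2) := by
    unfold gauss2
    rw [gaussianReal_of_var_ne_zero _ one_ne_zero, prod_withDensity hm hm]
    rfl
  rw [e, withDensity_apply _ hT, ← lintegral_indicator hT, ← lintegral_comp_polarCoord_symm]
  have : ∀ z ∈ polarCoord.target, ENNReal.ofReal z.1 • T.indicator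
      (fun z : ℝ × ℝ => gaussianPDF 0 1 z.1 * gaussianPDF 0 1 z.2) (polarCoord.symm z) =
      (ENNReal.ofReal z.1 * ENNReal.ofReal ((2 * Real.pi)⁻¹ * Real.exp (- z.1 ^ 2 / 2))) *
        S.indicator 1 z.2 := by
    rintro ⟨r, t⟩ ⟨hr, ht⟩
    have := h r t hr ht
    simp only [polarCoord_symm_apply, smul_eq_mul]
    by_cases hs : t ∈ S
    · rw [Set.indicator_of_mem (this.2 hs), Set.indicator_of_mem hs]
      simp only [dens_polar, Pi.one_apply, mul_one]
    · rw [Set.indicator_of_notMem (fun h' => hs (this.1 h')), Set.indicator_of_notMem hs]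
      simp
  rw [setLIntegral_congr_fun polarCoord.open_target.measurableSet this]
  have ht : polarCoord.target = Set.Ioi (0:ℝ) ×ˢ Set.Ioo (-Real.pi) Real.pi := rfl
  rw [ht, Measure.volume_eq_prod, ← Measure.prod_restrict, 
    lintegral_prod_mul (f := fun r : ℝ => ENNReal.ofReal r * ENNReal.ofReal ((2 * Real.pi)⁻¹ * Real.exp (- r ^ 2 / 2)))
      (g := S.indicator 1) (by fun_prop) (by exact (measurable_one.indicator hS).aemeasurable)]
  rw [lintegral_indicator_one hS, Measure.restrict_apply hS, Set.inter_eq_left.2 hS']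
  rfl

lemma radK_eq : radK * ENNReal.ofReal (2 * Real.pi) = 1 := by
  have := gauss2_sector Set.univ MeasurableSet.univ (Set.Ioo (-Real.pi) Real.pi) measurableSet_Ioo
    subset_rfl (by intro r t _ ht; simpa using ht)
  rw [measure_univ, Real.volume_Ioo] at this
  rw [this]; congr 2; ring

lemma measurableSet_wedge (c s : ℝ) :
    MeasurableSet {z : ℝ × ℝ | 0 < z.1 ∧ c * z.1 + s * z.2 < 0} := by
  have h1 : MeasurableSet {z : ℝ × ℝ | 0 < z.1} := measurableSet_lt (by fun_prop) (by fun_prop)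
  have h2 : MeasurableSet {z : ℝ × ℝ | c * z.1 + s * z.2 < 0} :=
    measurableSet_lt (by fun_prop) (by fun_prop)
  exact h1.inter h2

lemma gauss2_wedge (φ : ℝ) (h0 : 0 ≤ φ) (h1 : φ ≤ Real.pi) :
    (gauss2 {z | 0 < z.1 ∧ Real.cos φ * z.1 + Real.sin φ * z.2 < 0}).toReal = φ / (2 * Real.pi) := by
  have hpi := Real.pi_pos
  have := gauss2_sector {z | 0 < z.1 ∧ Real.cos φ * z.1 + Real.sin φ * z.2 < 0}
    (measurableSet_wedge _ _)
    (Set.Ioo (-(Real.pi/2)) (φ - Real.pi / 2)) measurableSet_Ioo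
    (Set.Ioo_subset_Ioo (by linarith) (by linarith)) (by
      rintro r t hr ⟨ht1, ht2⟩
      have e : Real.cos φ * (r * Real.cos t) + Real.sin φ * (r * Real.sin t) =
        r * Real.cos (t - φ) := by rw [Real.cos_sub]; ring
      have hneg : r * Real.cos (t - φ) < 0 ↔ Real.cos (t - φ) < 0 :=
        ⟨fun h => by by_contra hcon; push Not at hcon; nlinarith, fun h => mul_neg_of_pos_of_neg hr h⟩
      simp only [Set.mem_ofPred_eq, e, Set.mem_Ioo, mul_pos_iff_of_pos_left hr, hneg]
      constructor
      · rintro ⟨hc, hd⟩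
        have ha : -(Real.pi/2) < t := by
          by_contra hcon
          push Not at hcon
          have := Real.cos_nonpos_of_pi_div_two_le_of_le (x := -t) (by linarith) (by linarith)
          rw [Real.cos_neg] at this; linarith
        have hb : t < Real.pi/2 := by
          by_contra hcon
          push Not at hcon
          have := Real.cos_nonpos_of_pi_div_two_le_of_le (x := t) (by linarith) (by linarith)
          linarith
        refine ⟨ha, ?_⟩
        by_contra hcon
        push Not at hcon
        have := Real.cos_nonneg_of_neg_pi_div_two_le_of_le (x := t - φ) (by linarith) (by linarith)
        linarith
      · rintro ⟨ha, hb⟩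
        refine ⟨Real.cos_pos_of_mem_Ioo ⟨by linarith, by linarith⟩, ?_⟩
        rw [← Real.cos_neg]
        exact Real.cos_neg_of_pi_div_two_lt_of_lt (x := -(t - φ)) (by linarith) (by linarith))
  rw [this, Real.volume_Ioo]
  have hk := congrArg ENNReal.toReal radK_eq
  rw [ENNReal.toReal_mul, ENNReal.toReal_ofReal (by positivity)] at hk
  rw [ENNReal.toReal_mul, ENNReal.toReal_ofReal (by linarith)]
  simp only [ENNReal.toReal_one] at hk
  field_simp
  linear_combination φ * hk

lemma int_gauss (c : ℝ) : ∫ x, Complex.exp (((c * x : ℝ) : ℂ) * Complex.I) ∂(gaussianReal 0 1) =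
    Complex.exp (((-(c^2) / 2 : ℝ) : ℂ)) := by
  have := charFun_gaussianReal (μ := 0) (v := 1) c
  rw [charFun_apply_real] at this
  push_cast
  rw [this]
  congr 1
  push_cast; ring

lemma int_pi (n : ℕ) (c : Fin n → ℝ) :
    ∫ x, Complex.exp (((∑ i, c i * x i : ℝ) : ℂ) * Complex.I)
      ∂(Measure.pi fun _ : Fin n => gaussianReal 0 1) =
    Complex.exp (((-(∑ i, c i ^2) / 2 : ℝ) : ℂ)) := by
  have : ∀ x : Fin n → ℝ, Complex.exp (((∑ i, c i * x i : ℝ) : ℂ) * Complex.I) =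
      ∏ i, Complex.exp (((c i * x i : ℝ) : ℂ) * Complex.I) := by
    intro x
    rw [← Complex.exp_sum, Complex.ofReal_sum, Finset.sum_mul]
  simp_rw [this]
  rw [integral_fintype_prod_eq_prod (f := fun i (x : ℝ) => Complex.exp (((c i * x : ℝ) : ℂ) * Complex.I))]
  simp_rw [int_gauss]
  rw [← Complex.exp_sum, ← Complex.ofReal_sum, ← Finset.sum_div, Finset.sum_neg_distrib]

lemma int_gauss2 (a b : ℝ) :
    ∫ z, Complex.exp (((a * z.1 + b * z.2 : ℝ) : ℂ) * Complex.I) ∂gauss2 =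
    Complex.exp (((-(a ^ 2 + b ^ 2) / 2 : ℝ) : ℂ)) := by
  have : ∀ z : ℝ × ℝ, Complex.exp (((a * z.1 + b * z.2 : ℝ) : ℂ) * Complex.I) =
      Complex.exp (((a * z.1 : ℝ) : ℂ) * Complex.I) * Complex.exp (((b * z.2 : ℝ) : ℂ) * Complex.I) := by
    intro z
    rw [← Complex.exp_add, Complex.ofReal_add, add_mul]
  simp_rw [this]
  unfold gauss2
  rw [integral_prod_mul (f := fun x : ℝ => Complex.exp (((a * x : ℝ) : ℂ) * Complex.I))
    (g := fun x : ℝ => Complex.exp (((b * x : ℝ) : ℂ) * Complex.I)), int_gauss, int_gauss,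
    ← Complex.exp_add, ← Complex.ofReal_add]
  congr 2; ring

lemma joint_law (n : ℕ) (a b : Fin n → ℝ) (c s : ℝ) (ha : ∑ i, a i ^ 2 = 1) (hb : ∑ i, b i ^ 2 = 1)
    (hab : ∑ i, a i * b i = c) (hcs : c ^ 2 + s ^ 2 = 1) :
    (Measure.pi fun _ : Fin n => gaussianReal 0 1).map
      (fun z => ((∑ i, a i * z i, ∑ i, b i * z i) : ℝ × ℝ)) =
    gauss2.map (fun z => (z.1, c * z.1 + s * z.2)) := by
  have m1 : Measurable (fun z : Fin n → ℝ => ((∑ i, a i * z i, ∑ i, b i * z i) : ℝ × ℝ)) := by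
    fun_prop
  have m2 : Measurable (fun z : ℝ × ℝ => (z.1, c * z.1 + s * z.2)) := by fun_prop
  have := Measure.isProbabilityMeasure_map (μ := Measure.pi fun _ : Fin n => gaussianReal 0 1) m1.aemeasurable
  have := Measure.isProbabilityMeasure_map (μ := gauss2) m2.aemeasurable
  refine Measure.ext_of_charFunDual ?_
  ext L
  have hL : ∀ x y : ℝ, L (x, y) = L (1, 0) * x + L (0, 1) * y := by
    intro x y
    have : ((x, y) : ℝ × ℝ) = x • (1, 0) + y • (0, 1) := by simp
    rw [this, map_add, map_smul, map_smul]
    simp [mul_comm]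
  set u := L (1, 0)
  set v := L (0, 1)
  rw [charFunDual_apply, charFunDual_apply,
    integral_map m1.aemeasurable (by fun_prop), integral_map m2.aemeasurable (by fun_prop)]
  simp only [hL]
  have e1 : ∀ z : Fin n → ℝ, u * ∑ i, a i * z i + v * ∑ i, b i * z i =
      ∑ i, (u * a i + v * b i) * z i := by
    intro z
    rw [Finset.mul_sum, Finset.mul_sum, ← Finset.sum_add_distrib]
    exact Finset.sum_congr rfl fun i _ => by ring
  have e2 : ∀ z : ℝ × ℝ, u * z.1 + v * (c * z.1 + s * z.2) = (u + v * c) * z.1 + (v * s) * z.2 := by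
    intro z; ring
  simp only [e1, e2]
  rw [int_pi, int_gauss2]
  congr 4
  have : ∑ i, (u * a i + v * b i) ^ 2 =
      u ^ 2 * ∑ i, a i ^ 2 + 2 * u * v * ∑ i, a i * b i + v ^ 2 * ∑ i, b i ^ 2 := by
    simp only [Finset.mul_sum, ← Finset.sum_add_distrib]
    exact Finset.sum_congr rfl fun i _ => by ring
  rw [this, ha, hb, hab]
  linear_combination -v^2 * hcs

/-- Standard Gaussian product measure. -/
noncomputable def gpi (n : ℕ) : Measure (Fin n → ℝ) := Measure.pi fun _ : Fin n => gaussianReal 0 1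

instance (n : ℕ) : IsProbabilityMeasure (gpi n) := by unfold gpi; infer_instance

lemma abs_dot_le (n : ℕ) (a b : Fin n → ℝ) (ha : ∑ i, a i ^ 2 = 1) (hb : ∑ i, b i ^ 2 = 1) :
    -1 ≤ ∑ i, a i * b i ∧ ∑ i, a i * b i ≤ 1 := by
  have h := Finset.sum_mul_sq_le_sq_mul_sq Finset.univ a b
  rw [ha, hb, one_mul] at h
  exact ⟨by nlinarith, by nlinarith⟩

lemma joint_law' (n : ℕ) (a b : Fin n → ℝ) (ha : ∑ i, a i ^ 2 = 1) (hb : ∑ i, b i ^ 2 = 1)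
    (T : Set (ℝ × ℝ)) (hT : MeasurableSet T) :
    gpi n {z | (∑ i, a i * z i, ∑ i, b i * z i) ∈ T} =
      gauss2 {z | (z.1, Real.cos (Real.arccos (∑ i, a i * b i)) * z.1 +
        Real.sin (Real.arccos (∑ i, a i * b i)) * z.2) ∈ T} := by
  obtain ⟨h1, h2⟩ := abs_dot_le n a b ha hb
  have := joint_law n a b _ (Real.sin (Real.arccos (∑ i, a i * b i))) ha hb
    (Real.cos_arccos h1 h2).symm (by rw [add_comm]; exact Real.sin_sq_add_cos_sq _)
  have h := congrArg (fun μ => μ T) this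
  rw [Measure.map_apply (by fun_prop) hT, Measure.map_apply (by fun_prop) hT] at h
  exact h

lemma unit_wedge (n : ℕ) (a b : Fin n → ℝ) (ha : ∑ i, a i ^ 2 = 1) (hb : ∑ i, b i ^ 2 = 1) :
    (gpi n {z | 0 < ∑ i, a i * z i ∧ ∑ i, b i * z i < 0}).toReal =
      Real.arccos (∑ i, a i * b i) / (2 * Real.pi) := by
  have hT : MeasurableSet {z : ℝ × ℝ | 0 < z.1 ∧ z.2 < 0} := by
    simpa using measurableSet_wedge 0 1
  have := joint_law' n a b ha hb _ hT
  rw [← gauss2_wedge _ (Real.arccos_nonneg _) (Real.arccos_le_pi _)]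
  exact congrArg ENNReal.toReal this

lemma unit_null (n : ℕ) (a : Fin n → ℝ) (ha : ∑ i, a i ^ 2 = 1) :
    gpi n {z | ∑ i, a i * z i = 0} = 0 := by
  have hT : MeasurableSet {z : ℝ × ℝ | z.1 = 0} := measurableSet_eq_fun (by fun_prop) (by fun_prop)
  have := joint_law' n a a ha ha _ hT
  refine this.trans ?_
  have e : {z : ℝ × ℝ | z.1 = 0} = {0} ×ˢ Set.univ := by ext; simp
  have := nullSingletonClass_gaussianReal (μ := 0) (v := 1) one_ne_zero
  change gauss2 {z : ℝ × ℝ | z.1 = 0} = 0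
  rw [e, gauss2, Measure.prod_prod, measure_singleton, zero_mul]

lemma unit_sign (n : ℕ) (a b : Fin n → ℝ) (ha : ∑ i, a i ^ 2 = 1) (hb : ∑ i, b i ^ 2 = 1) :
    (gpi n {z | Real.sign (∑ i, a i * z i) ≠ Real.sign (∑ i, b i * z i)}).toReal =
      Real.arccos (∑ i, a i * b i) / Real.pi := by
  have hA : ∀ᵐ z ∂(gpi n), ∑ i, a i * z i ≠ 0 := by
    rw [ae_iff]; simpa using unit_null n a ha
  have hB : ∀ᵐ z ∂(gpi n), ∑ i, b i * z i ≠ 0 := by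
    rw [ae_iff]; simpa using unit_null n b hb
  have e : gpi n {z | Real.sign (∑ i, a i * z i) ≠ Real.sign (∑ i, b i * z i)} =
      gpi n ({z | 0 < ∑ i, a i * z i ∧ ∑ i, b i * z i < 0} ∪
        {z | 0 < ∑ i, b i * z i ∧ ∑ i, a i * z i < 0}) := by
    apply measure_congr
    filter_upwards [hA, hB] with z hz1 hz2
    apply propext
    change (Real.sign (∑ i, a i * z i) ≠ Real.sign (∑ i, b i * z i)) ↔
      ((0 < ∑ i, a i * z i ∧ ∑ i, b i * z i < 0) ∨ (0 < ∑ i, b i * z i ∧ ∑ i, a i * z i < 0))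
    rcases lt_or_gt_of_ne hz1 with h1 | h1 <;> rcases lt_or_gt_of_ne hz2 with h2 | h2 <;>
      simp [Real.sign_of_neg, Real.sign_of_pos, h1, h2, h1.le, h2.le] <;> norm_num
  have hm : MeasurableSet {z : Fin n → ℝ | 0 < ∑ i, b i * z i ∧ ∑ i, a i * z i < 0} := by
    have h1 : MeasurableSet {z : Fin n → ℝ | 0 < ∑ i, b i * z i} :=
      measurableSet_lt (by fun_prop) (by fun_prop)
    have h2 : MeasurableSet {z : Fin n → ℝ | ∑ i, a i * z i < 0} :=
      measurableSet_lt (by fun_prop) (by fun_prop)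
    exact h1.inter h2
  rw [e, measure_union _ hm, ENNReal.toReal_add (measure_ne_top _ _) (measure_ne_top _ _),
    unit_wedge n a b ha hb, unit_wedge n b a hb ha]
  · simp_rw [mul_comm (b _) (a _)]
    field_simp
    norm_num
  · rw [Set.disjoint_left]
    rintro z ⟨h1, h2⟩ ⟨h3, h4⟩
    linarith

lemma sumsq_pos {n : ℕ} {a : Fin n → ℝ} (ha : a ≠ 0) : 0 < Real.sqrt (∑ i, a i ^ 2) := by
  obtain ⟨i, hi⟩ := Function.ne_iff.1 ha
  apply Real.sqrt_pos.2
  exact Finset.sum_pos' (fun _ _ => sq_nonneg _) ⟨i, Finset.mem_univ _, by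
    have : a i ≠ 0 := hi
    positivity⟩

lemma normalized {n : ℕ} {a : Fin n → ℝ} (ha : a ≠ 0) :
    ∑ i, (a i / Real.sqrt (∑ i, a i ^ 2)) ^ 2 = 1 := by
  have h := sumsq_pos ha
  simp_rw [div_pow]
  rw [← Finset.sum_div, Real.sq_sqrt (Finset.sum_nonneg fun _ _ => sq_nonneg _)]
  exact div_self (Real.sqrt_pos.1 h).ne'

lemma dot_normalized {n : ℕ} (a z : Fin n → ℝ) (c : ℝ) :
    ∑ i, a i / c * z i = (∑ i, a i * z i) / c := by
  rw [Finset.sum_div]; exact Finset.sum_congr rfl fun i _ => by ring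

lemma sign_div_pos (x c : ℝ) (hc : 0 < c) : Real.sign (x / c) = Real.sign x := by
  rcases lt_trichotomy x 0 with h | h | h
  · rw [Real.sign_of_neg h, Real.sign_of_neg (div_neg_of_neg_of_pos h hc)]
  · simp [h]
  · rw [Real.sign_of_pos h, Real.sign_of_pos (div_pos h hc)]

lemma nz_null {n : ℕ} {a : Fin n → ℝ} (ha : a ≠ 0) : ∀ᵐ z ∂(gpi n), ∑ i, a i * z i ≠ 0 := by
  have h := unit_null n _ (normalized ha)
  rw [ae_iff]
  simpa [dot_normalized, (sumsq_pos ha).ne'] using h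

lemma ang_sign {n : ℕ} {a b : Fin n → ℝ} (ha : a ≠ 0) (hb : b ≠ 0) :
    (gpi n {z | Real.sign (∑ i, a i * z i) ≠ Real.sign (∑ i, b i * z i)}).toReal =
      ang a b / Real.pi := by
  have h := unit_sign n _ _ (normalized ha) (normalized hb)
  simp only [dot_normalized, sign_div_pos _ _ (sumsq_pos ha), sign_div_pos _ _ (sumsq_pos hb)] at h
  rw [h, ang, if_neg (by simp [ha, hb])]
  congr 2
  simp_rw [mul_div_assoc', ← Finset.sum_div]
  rw [div_div, mul_comm (Real.sqrt (∑ i, b i ^ 2))]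

lemma measurable_masked {n : ℕ} (Ω : Finset (Fin n)) :
    Measurable (fun z : Fin n → ℝ => restrict z Ω) := by
  rw [measurable_pi_iff]
  intro i
  unfold _root_.restrict
  by_cases h : i ∈ Ω <;> simp only [h, if_true, if_false] <;> fun_prop

lemma dot_restrict {n : ℕ} (p z : Fin n → ℝ) (Ω : Finset (Fin n)) :
    ∑ i, p i * restrict z Ω i = ∑ i, restrict p Ω i * z i := by
  refine Finset.sum_congr rfl fun i _ => ?_
  unfold _root_.restrict
  split_ifs <;> simp

/-- weights -/
noncomputable def wt (n : ℕ) (θ : ℝ) (Ω : Finset (Fin n)) : ENNReal :=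
  ENNReal.ofReal (θ ^ Ω.card * (1 - θ) ^ (n - Ω.card))

lemma pi_bg (n : ℕ) (θ : ℝ) (hθ : θ ∈ Set.Ioo (0 : ℝ) 1) :
    (Measure.pi fun _ : Fin n => bg θ) =
      ∑ Ω : Finset (Fin n), wt n θ Ω • (gpi n).map (fun z => restrict z Ω) := by
  classical
  obtain ⟨h0, h1⟩ := hθ
  refine Measure.pi_eq fun s hs => ?_
  rw [Measure.finsetSum_apply]
  have hb : ∀ i, bg θ (s i) = ENNReal.ofReal θ * gaussianReal 0 1 (s i) +
      ENNReal.ofReal (1 - θ) * Measure.dirac 0 (s i) := by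
    intro i
    rw [bg, Measure.add_apply, add_comm]
    rfl
  simp_rw [hb]
  rw [Fintype.prod_add]
  refine Finset.sum_congr rfl fun Ω _ => ?_
  rw [Measure.smul_apply, Measure.map_apply (measurable_masked Ω) (MeasurableSet.univ_pi hs)]
  have e : (fun z : Fin n → ℝ => restrict z Ω) ⁻¹' (Set.univ.pi s) =
      Set.univ.pi (fun i => if i ∈ Ω then s i else {_x | (0:ℝ) ∈ s i}) := by
    ext z
    simp only [Set.mem_preimage, Set.mem_univ_pi, _root_.restrict]
    refine forall_congr' fun i => ?_
    split_ifs <;> rfl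
  rw [e, gpi, Measure.pi_pi, ← Finset.prod_mul_prod_compl Ω, Finset.prod_mul_distrib,
    Finset.prod_mul_distrib, Finset.prod_const, Finset.prod_const, wt,
    ENNReal.ofReal_mul (by positivity), ENNReal.ofReal_pow h0.le, ENNReal.ofReal_pow (by linarith),
    Finset.card_compl, Fintype.card_fin, smul_eq_mul, mul_mul_mul_comm]
  congr 2
  · exact Finset.prod_congr rfl fun i hi => by rw [if_pos hi]
  · refine Finset.prod_congr rfl fun i hi => ?_
    rw [if_neg (Finset.mem_compl.1 hi), Measure.dirac_apply' _ (hs i)]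
    by_cases h : (0:ℝ) ∈ s i <;> simp [h]

/-- For x with i.i.d. BG(θ) entries and unit vectors p, q, provided events
    where exactly one of ⟨p,x⟩, ⟨q,x⟩ vanishes have probability zero
    conditional on each support Ω, one has
    P(sign⟨p,x⟩ ≠ sign⟨q,x⟩) = (1/π)·E_Ω[angle(p_Ω, q_Ω)]. -/
theorem stmt18 (n : ℕ) (θ : ℝ) (hθ : θ ∈ Set.Ioo (0 : ℝ) 1)
    (p q : Fin n → ℝ)
    (hp : Real.sqrt (∑ i, p i ^ 2) = 1) (hq : Real.sqrt (∑ i, q i ^ 2) = 1)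
    (hnull : ∀ Ω : Finset (Fin n),
      (Measure.pi fun _ : Fin n => bg θ)
        ({x | ((∑ i, p i * x i) = 0) ≠ ((∑ i, q i * x i) = 0)} ∩
          {x | ∀ i, x i ≠ 0 ↔ i ∈ Ω}) = 0) :
    ((Measure.pi fun _ : Fin n => bg θ)
        {x | Real.sign (∑ i, p i * x i) ≠ Real.sign (∑ i, q i * x i)}).toReal =
      (1 / Real.pi) * ∑ Ω ∈ (Finset.univ : Finset (Fin n)).powerset,
        θ ^ Ω.card * (1 - θ) ^ (n - Ω.card) * ang (restrict p Ω) (restrict q Ω) := by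
  classical
  obtain ⟨h0, h1⟩ := hθ
  have h1' : 0 < 1 - θ := by linarith
  have msign : Measurable Real.sign := by
    have : Real.sign = fun r : ℝ => if r < 0 then -1 else if 0 < r then 1 else 0 := by
      ext r; rfl
    rw [this]
    exact Measurable.ite (measurableSet_lt measurable_id measurable_const) measurable_const
      (Measurable.ite (measurableSet_lt measurable_const measurable_id) measurable_const
        measurable_const)
  have mS : MeasurableSet {x : Fin n → ℝ |
      Real.sign (∑ i, p i * x i) ≠ Real.sign (∑ i, q i * x i)} := by
    have : MeasurableSet {x : Fin n → ℝ |
        Real.sign (∑ i, p i * x i) = Real.sign (∑ i, q i * x i)} :=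
      measurableSet_eq_fun (msign.comp (by fun_prop)) (msign.comp (by fun_prop))
    exact this.compl
  have wtpos : ∀ Ω : Finset (Fin n), wt n θ Ω ≠ 0 := by
    intro Ω
    rw [wt, Ne, ENNReal.ofReal_eq_zero, not_le]
    positivity
  have hz : ∀ᵐ z ∂(gpi n), ∀ i, z i ≠ 0 := by
    rw [ae_all_iff]
    intro i
    have := nz_null (n := n) (a := Pi.single i 1) (by simp)
    filter_upwards [this] with z hz
    simpa [Pi.single_apply] using hz
  -- the hypothesis on null events
  have hex : ∀ Ω : Finset (Fin n), ∀ᵐ z ∂(gpi n),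
      ((∑ i, restrict p Ω i * z i) = 0 ↔ (∑ i, restrict q Ω i * z i) = 0) := by
    intro Ω
    have h := hnull Ω
    rw [pi_bg n θ ⟨h0, h1⟩, Measure.finsetSum_apply, Finset.sum_eq_zero_iff] at h
    have h := h Ω (Finset.mem_univ _)
    rw [Measure.smul_apply, smul_eq_mul, mul_eq_zero, or_iff_right (wtpos Ω)] at h
    have h := ae_of_ae_map (measurable_masked Ω).aemeasurable (measure_eq_zero_iff_ae_notMem.1 h)
    filter_upwards [h, hz] with z hz1 hz2
    by_contra hcon
    apply hz1
    refine ⟨?_, ?_⟩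
    · intro heq
      apply hcon
      rw [dot_restrict, dot_restrict] at heq
      exact iff_of_eq heq
    · intro i
      simp [_root_.restrict, hz2 i]
  have key : ∀ Ω : Finset (Fin n),
      (gpi n {z | Real.sign (∑ i, restrict p Ω i * z i) ≠
        Real.sign (∑ i, restrict q Ω i * z i)}).toReal =
      ang (restrict p Ω) (restrict q Ω) / Real.pi := by
    intro Ω
    by_cases ha : restrict p Ω = 0
    · by_cases hb : restrict q Ω = 0
      · simp [ha, hb, ang]
      · exfalso
        obtain ⟨z, hz1, hz2⟩ := ((hex Ω).and (nz_null hb)).exists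
        exact hz2 (hz1.1 (by simp [ha]))
    · by_cases hb : restrict q Ω = 0
      · exfalso
        obtain ⟨z, hz1, hz2⟩ := ((hex Ω).and (nz_null ha)).exists
        exact hz2 (hz1.2 (by simp [hb]))
      · exact ang_sign ha hb
  rw [pi_bg n θ ⟨h0, h1⟩, Measure.finsetSum_apply, ENNReal.toReal_sum, Finset.powerset_univ,
    Finset.mul_sum]
  · refine Finset.sum_congr rfl fun Ω _ => ?_
    rw [Measure.smul_apply, smul_eq_mul, ENNReal.toReal_mul,
      Measure.map_apply (measurable_masked Ω) mS]
    have e : (fun z : Fin n → ℝ => restrict z Ω) ⁻¹' {x : Fin n → ℝ |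
      Real.sign (∑ i, p i * x i) ≠ Real.sign (∑ i, q i * x i)} =
      {z | Real.sign (∑ i, restrict p Ω i * z i) ≠
        Real.sign (∑ i, restrict q Ω i * z i)} := by
      ext z
      change Real.sign (∑ i, p i * restrict z Ω i) ≠ Real.sign (∑ i, q i * restrict z Ω i) ↔ 
        Real.sign (∑ i, restrict p Ω i * z i) ≠ Real.sign (∑ i, restrict q Ω i * z i)
      rw [dot_restrict, dot_restrict]
    rw [e, key, wt, ENNReal.toReal_ofReal (by positivity)]
    ring
  · intro Ω _
    rw [Measure.smul_apply, smul_eq_mul]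
    have := Measure.isProbabilityMeasure_map (μ := gpi n) (measurable_masked Ω).aemeasurable
    exact ENNReal.mul_ne_top (by simp [wt]) (measure_ne_top _ _)
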